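/- Let 𝒢 be a group structure on {1,…,p} with positive weights (η_g), let Ω(w) = Σ_{g∈𝒢} η_g ‖w_g‖_∞, let λ > 0 and u ∈ ℝ^p. A pair (w, ξ), with w ∈ ℝ^p and ξ = (ξ^g)_{g∈𝒢} a family of vectors in ℝ^p, satisfies: w is the minimizer of w' ↦ ½‖u − w'‖₂² + λΩ(w') and ξ is a minimizer of ½‖u − Σ_g ξ^g‖₂² over dual-feasible families at level λ, if and only if ξ is dual-feasible at level λ, w = u − Σ_{g∈𝒢} ξ^g, and for every g ∈ 𝒢 either (⟨w, ξ^g⟩ = ‖w_g‖_∞ · ‖ξ^g‖₁ and ‖ξ^g‖₁ = λη_g) or w_g = 0. -/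

import Mathlib

open Finset

/-- The ℓ∞-norm of the subvector of `w` indexed by the group `g`
(equal to `max_{j ∈ g} |w j|` for nonempty `g`, and `0` for empty `g`). -/
noncomputable def gsup {p : ℕ} (g : Finset (Fin p)) (w : Fin p → ℝ) : ℝ :=
  ↑(g.sup fun j => Real.nnabs (w j))

/-- The structured norm `Ω(w) = ∑_{g ∈ 𝒢} η_g ‖w_g‖_∞`. -/
noncomputable def Omega {p : ℕ} (G : Finset (Finset (Fin p)))
    (η : Finset (Fin p) → ℝ) (w : Fin p → ℝ) : ℝ :=
  ∑ g ∈ G, η g * gsup g w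

/-- ℓ₁-norm of a vector. -/
def l1 {p : ℕ} (v : Fin p → ℝ) : ℝ := ∑ j, |v j|

/-- A family `ξ = (ξ^g)_{g ∈ 𝒢}` is dual-feasible at level `lam` if `ξ^g_j = 0` for
`j ∉ g` and `‖ξ^g‖₁ ≤ lam * η_g` for every `g ∈ 𝒢`. -/
def DualFeasible {p : ℕ} (G : Finset (Finset (Fin p))) (η : Finset (Fin p) → ℝ)
    (lam : ℝ) (ξ : Finset (Fin p) → Fin p → ℝ) : Prop :=
  ∀ g ∈ G, (∀ j, j ∉ g → ξ g j = 0) ∧ l1 (ξ g) ≤ lam * η g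

/-- Primal (proximal) objective `½‖u − w‖₂² + λ Ω(w)`. -/
noncomputable def proxObj {p : ℕ} (G : Finset (Finset (Fin p)))
    (η : Finset (Fin p) → ℝ) (lam : ℝ) (u w : Fin p → ℝ) : ℝ :=
  (1/2) * ∑ j, (u j - w j)^2 + lam * Omega G η w

/-- Dual objective `½‖u − ∑_{g} ξ^g‖₂²`. -/
noncomputable def dualObj {p : ℕ} (G : Finset (Finset (Fin p))) (u : Fin p → ℝ)
    (ξ : Finset (Fin p) → Fin p → ℝ) : ℝ :=
  (1/2) * ∑ j, (u j - ∑ g ∈ G, ξ g j)^2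

lemma gsup_nonneg' {p : ℕ} (g : Finset (Fin p)) (w : Fin p → ℝ) : 0 ≤ gsup g w := by
  unfold gsup
  exact NNReal.coe_nonneg _

lemma abs_le_gsup {p : ℕ} (g : Finset (Fin p)) (w : Fin p → ℝ) (j : Fin p) (hj : j ∈ g) :
    |w j| ≤ gsup g w := by
  unfold gsup
  have h := Finset.le_sup (f := fun j => Real.nnabs (w j)) hj
  have h2 : ((Real.nnabs (w j) : NNReal) : ℝ) ≤ ↑(g.sup fun j => Real.nnabs (w j)) := by
    exact_mod_cast h
  simpa using h2

lemma exists_gsup {p : ℕ} (g : Finset (Fin p)) (w : Fin p → ℝ) (hg : g.Nonempty) :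
    ∃ j ∈ g, gsup g w = |w j| := by
  obtain ⟨j, hj, h⟩ := Finset.exists_mem_eq_sup g hg (fun j => Real.nnabs (w j))
  refine ⟨j, hj, ?_⟩
  unfold gsup
  rw [h]
  simp

lemma gsup_zero {p : ℕ} (g : Finset (Fin p)) (w : Fin p → ℝ) (hg : g.Nonempty)
    (h : ∀ j ∈ g, w j = 0) : gsup g w = 0 := by
  obtain ⟨j, hj, e⟩ := exists_gsup g w hg
  rw [e, h j hj, abs_zero]

lemma holder {p : ℕ} (g : Finset (Fin p)) (w x : Fin p → ℝ) (hx : ∀ j, j ∉ g → x j = 0) :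
    ∑ j, w j * x j ≤ gsup g w * l1 x := by
  unfold l1
  rw [Finset.mul_sum]
  apply Finset.sum_le_sum
  intro j _
  by_cases hj : j ∈ g
  · calc w j * x j ≤ |w j * x j| := le_abs_self _
      _ = |w j| * |x j| := abs_mul _ _
      _ ≤ _ := mul_le_mul_of_nonneg_right (abs_le_gsup g w j hj) (abs_nonneg _)
  · simp [hx j hj]

lemma holder_feas {p : ℕ} {G : Finset (Finset (Fin p))} {η : Finset (Fin p) → ℝ}
    {lam : ℝ} {ξ : Finset (Fin p) → Fin p → ℝ} (h : DualFeasible G η lam ξ)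
    (w : Fin p → ℝ) (g : Finset (Fin p)) (hg : g ∈ G) :
    ∑ j, w j * ξ g j ≤ lam * η g * gsup g w := by
  have h1 := holder g w (ξ g) (h g hg).1
  have h2 := mul_le_mul_of_nonneg_left (h g hg).2 (gsup_nonneg' g w)
  linarith

lemma sum_swap {p : ℕ} (G : Finset (Finset (Fin p))) (w : Fin p → ℝ)
    (ξ : Finset (Fin p) → Fin p → ℝ) :
    ∑ j, w j * ∑ g ∈ G, ξ g j = ∑ g ∈ G, ∑ j, w j * ξ g j := by
  simp_rw [Finset.mul_sum]
  exact Finset.sum_comm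

lemma lam_omega {p : ℕ} (G : Finset (Finset (Fin p))) (η : Finset (Fin p) → ℝ) (lam : ℝ)
    (w : Fin p → ℝ) : lam * Omega G η w = ∑ g ∈ G, lam * η g * gsup g w := by
  unfold Omega
  rw [Finset.mul_sum]
  exact Finset.sum_congr rfl fun g _ => by ring

/-- Strong optimality of the primal point under the KKT conditions. -/
lemma primal_strong {p : ℕ} {G : Finset (Finset (Fin p))} {η : Finset (Fin p) → ℝ}
    {lam : ℝ} {u v : Fin p → ℝ} {ξ : Finset (Fin p) → Fin p → ℝ}
    (hf : DualFeasible G η lam ξ) (hv : ∀ j, v j = u j - ∑ g ∈ G, ξ g j)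
    (hk : ∀ g ∈ G, ∑ j, v j * ξ g j = lam * η g * gsup g v) (w' : Fin p → ℝ) :
    proxObj G η lam u v + (1/2) * ∑ j, (w' j - v j)^2 ≤ proxObj G η lam u w' := by
  have h1 : lam * Omega G η v = ∑ j, v j * ∑ g ∈ G, ξ g j := by
    rw [lam_omega, sum_swap]
    exact (Finset.sum_congr rfl hk).symm
  have h2 : ∑ j, w' j * ∑ g ∈ G, ξ g j ≤ lam * Omega G η w' := by
    rw [lam_omega, sum_swap]
    exact Finset.sum_le_sum fun g hg => holder_feas hf w' g hg
  unfold proxObj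
  have h3 : (1/2) * ∑ j, (u j - v j)^2 + ∑ j, v j * ∑ g ∈ G, ξ g j
      + (1/2) * ∑ j, (w' j - v j)^2
      = (1/2) * ∑ j, (u j - w' j)^2 + ∑ j, w' j * ∑ g ∈ G, ξ g j := by
    simp only [Finset.mul_sum (s := (Finset.univ : Finset (Fin p))) (a := (1/2 : ℝ)),
      ← Finset.sum_add_distrib (s := (Finset.univ : Finset (Fin p)))]
    refine Finset.sum_congr rfl fun j _ => ?_
    have : ∑ g ∈ G, ξ g j = u j - v j := by rw [hv j]; ring
    rw [this]; ring
  linarith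

/-- Dual optimality implies the variational inequality blockwise. -/
lemma dual_var {p : ℕ} {G : Finset (Finset (Fin p))} {η : Finset (Fin p) → ℝ}
    {lam : ℝ} {u v : Fin p → ℝ} {ξ : Finset (Fin p) → Fin p → ℝ}
    (hf : DualFeasible G η lam ξ) (hv : ∀ j, v j = u j - ∑ g ∈ G, ξ g j)
    (hopt : ∀ ξ' : Finset (Fin p) → Fin p → ℝ, DualFeasible G η lam ξ' →
        dualObj G u ξ ≤ dualObj G u ξ')
    (g : Finset (Fin p)) (hg : g ∈ G) (z : Fin p → ℝ) (hz : ∀ j, j ∉ g → z j = 0)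
    (hz1 : l1 z ≤ lam * η g) : ∑ j, v j * z j ≤ ∑ j, v j * ξ g j := by
  have key : ∀ t : ℝ, 0 < t → t ≤ 1 →
      2 * ∑ j, v j * (z j - ξ g j) ≤ t * ∑ j, (z j - ξ g j)^2 := by
    intro t ht ht1
    have hfeas : DualFeasible G η lam
        (Function.update ξ g (fun j => (1 - t) * ξ g j + t * z j)) := by
      intro g' hg'
      by_cases e : g' = g
      · subst e
        simp only [Function.update_self]
        refine ⟨fun j hj => by rw [hz j hj, (hf g' hg').1 j hj]; ring, ?_⟩
        have h1 := (hf g' hg').2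
        have : l1 (fun j => (1 - t) * ξ g' j + t * z j) ≤ (1 - t) * l1 (ξ g') + t * l1 z := by
          unfold l1
          rw [Finset.mul_sum, Finset.mul_sum, ← Finset.sum_add_distrib]
          refine Finset.sum_le_sum fun j _ => ?_
          refine (abs_add_le _ _).trans ?_
          rw [abs_mul, abs_mul, abs_of_nonneg (by linarith : 0 ≤ 1 - t), abs_of_pos ht]
        nlinarith
      · rw [Function.update_of_ne e]
        exact hf g' hg'
    have h := hopt _ hfeas
    unfold dualObj at h
    have hs : ∀ j, u j - ∑ g' ∈ G,
        Function.update ξ g (fun j => (1 - t) * ξ g j + t * z j) g' j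
        = v j - t * (z j - ξ g j) := by
      intro j
      rw [hv j, ← Finset.add_sum_erase G _ hg, ← Finset.add_sum_erase G (fun g => ξ g j) hg,
        Function.update_self]
      have : ∑ x ∈ G.erase g, Function.update ξ g (fun j => (1 - t) * ξ g j + t * z j) x j
          = ∑ x ∈ G.erase g, ξ x j :=
        Finset.sum_congr rfl fun x hx => by
          rw [Function.update_of_ne (Finset.ne_of_mem_erase hx)]
      rw [this]; ring
    simp_rw [hs, ← hv] at h
    have e : ∑ j, (v j - t * (z j - ξ g j))^2
        = ∑ j, (v j)^2 - t * (2 * ∑ j, v j * (z j - ξ g j) - t * ∑ j, (z j - ξ g j)^2) := by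
      simp only [Finset.mul_sum, ← Finset.sum_sub_distrib]
      exact Finset.sum_congr rfl fun j _ => by ring
    rw [e] at h
    by_contra hc
    push Not at hc
    have := mul_pos ht (sub_pos.2 hc)
    linarith
  have hA : ∑ j, v j * (z j - ξ g j) = ∑ j, v j * z j - ∑ j, v j * ξ g j := by
    rw [← Finset.sum_sub_distrib]
    exact Finset.sum_congr rfl fun j _ => by ring
  have hD : 0 ≤ ∑ j, (z j - ξ g j)^2 := Finset.sum_nonneg fun j _ => sq_nonneg _
  rw [hA] at key
  generalize ∑ j, (z j - ξ g j)^2 = D at key hD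
  by_contra hc
  push Not at hc
  have hApos := sub_pos.2 hc
  generalize ∑ j, v j * z j - ∑ j, v j * ξ g j = A at key hApos
  have h := key (min 1 (A / (D + 1))) (lt_min one_pos (by positivity)) (min_le_left _ _)
  have h2 : min 1 (A / (D + 1)) * D ≤ A / (D + 1) * D :=
    mul_le_mul_of_nonneg_right (min_le_right _ _) hD
  have h3 : A / (D + 1) * D ≤ A := by
    rw [div_mul_eq_mul_div, div_le_iff₀ (by linarith)]
    nlinarith
  linarith

/-- optimality conditions for the primal/dual pair of the proximal
problem (Lemma of Jenatton et al.). -/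
theorem stmt1 {p : ℕ} (G : Finset (Finset (Fin p))) (η : Finset (Fin p) → ℝ)
    (hne : ∀ g ∈ G, g.Nonempty) (hη : ∀ g ∈ G, 0 < η g)
    (lam : ℝ) (hlam : 0 < lam) (u : Fin p → ℝ)
    (w : Fin p → ℝ) (ξ : Finset (Fin p) → Fin p → ℝ) :
    ((∀ w' : Fin p → ℝ, proxObj G η lam u w ≤ proxObj G η lam u w') ∧
      DualFeasible G η lam ξ ∧
      (∀ ξ' : Finset (Fin p) → Fin p → ℝ, DualFeasible G η lam ξ' →
        dualObj G u ξ ≤ dualObj G u ξ'))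
    ↔
    (DualFeasible G η lam ξ ∧
      (∀ j, w j = u j - ∑ g ∈ G, ξ g j) ∧
      (∀ g ∈ G,
        ((∑ j, w j * ξ g j) = gsup g w * l1 (ξ g) ∧ l1 (ξ g) = lam * η g) ∨
        (∀ j ∈ g, w j = 0))) := by
  constructor
  · rintro ⟨hw, hf, hopt⟩
    set v : Fin p → ℝ := fun j => u j - ∑ g ∈ G, ξ g j with hvdef
    have hv : ∀ j, v j = u j - ∑ g ∈ G, ξ g j := fun j => rfl
    have hk : ∀ g ∈ G, ∑ j, v j * ξ g j = lam * η g * gsup g v := by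
      intro g hg
      refine le_antisymm (holder_feas hf v g hg) ?_
      obtain ⟨j0, hj0, e0⟩ := exists_gsup g v (hne g hg)
      have hpos : 0 < lam * η g := mul_pos hlam (hη g hg)
      have hc : ∃ s : ℝ, |s| ≤ 1 ∧ v j0 * s = |v j0| := by
        rcases le_total 0 (v j0) with h | h
        · exact ⟨1, by simp, by rw [abs_of_nonneg h]; ring⟩
        · exact ⟨-1, by simp, by rw [abs_of_nonpos h]; ring⟩
      obtain ⟨s, hs, hs2⟩ := hc
      have h := dual_var hf hv hopt g hg (Pi.single j0 (lam * η g * s)) ?_ ?_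
      · refine le_trans (le_of_eq ?_) h
        rw [Finset.sum_eq_single j0]
        · rw [Pi.single_eq_same, e0, ← hs2]; ring
        · intro b _ hb
          rw [Pi.single_eq_of_ne hb, mul_zero]
        · simp
      · intro j hj
        have hjj : j ≠ j0 := by
          rintro rfl
          exact hj hj0
        exact Pi.single_eq_of_ne hjj _
      · unfold l1
        rw [Finset.sum_eq_single j0]
        · rw [Pi.single_eq_same, abs_mul, abs_of_pos hpos]
          nlinarith
        · intro b _ hb
          rw [Pi.single_eq_of_ne hb, abs_zero]
        · simp
    have hst := primal_strong hf hv hk w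
    have hwv := hw v
    have hz : ∑ j, (w j - v j)^2 = 0 :=
      le_antisymm (by linarith) (Finset.sum_nonneg fun j _ => sq_nonneg _)
    have hwv' : w = v := by
      funext j
      have := (Finset.sum_eq_zero_iff_of_nonneg fun j _ => sq_nonneg (w j - v j)).1 hz j
        (Finset.mem_univ j)
      exact sub_eq_zero.1 (pow_eq_zero_iff (two_ne_zero) |>.1 this)
    clear_value v
    subst hwv'
    refine ⟨hf, hv, fun g hg => ?_⟩
    rcases (gsup_nonneg' g w).eq_or_lt with h0 | h0
    · right
      intro j hj
      have := abs_le_gsup g w j hj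
      rw [← h0] at this
      exact abs_nonpos_iff.1 this
    · left
      have h1 := holder g w (ξ g) (hf g hg).1
      have h2 := (hf g hg).2
      have h3 := hk g hg
      have h4 : l1 (ξ g) = lam * η g := by
        refine le_antisymm h2 (le_of_mul_le_mul_left ?_ h0)
        linarith
      exact ⟨by rw [h3, h4]; ring, h4⟩
  · rintro ⟨hf, hv, hc⟩
    have hk : ∀ g ∈ G, ∑ j, w j * ξ g j = lam * η g * gsup g w := by
      intro g hg
      rcases hc g hg with ⟨h1, h2⟩ | h
      · rw [h1, h2]; ring
      · rw [gsup_zero g w (hne g hg) h, mul_zero]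
        refine Finset.sum_eq_zero fun j _ => ?_
        by_cases hj : j ∈ g
        · rw [h j hj, zero_mul]
        · rw [(hf g hg).1 j hj, mul_zero]
    refine ⟨fun w' => ?_, hf, fun ξ' hf' => ?_⟩
    · have := primal_strong hf hv hk w'
      have h2 : 0 ≤ ∑ j, (w' j - w j)^2 := Finset.sum_nonneg fun j _ => sq_nonneg _
      linarith
    · have h1 : ∑ j, w j * ∑ g ∈ G, ξ' g j ≤ ∑ j, w j * ∑ g ∈ G, ξ g j := by
        rw [sum_swap, sum_swap]
        refine Finset.sum_le_sum fun g hg => ?_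
        rw [hk g hg]
        exact holder_feas hf' w g hg
      have h2 : ∑ j, (u j - ∑ g ∈ G, ξ g j)^2 + 2 * (∑ j, w j * ∑ g ∈ G, ξ g j)
          ≤ ∑ j, (u j - ∑ g ∈ G, ξ' g j)^2 + 2 * (∑ j, w j * ∑ g ∈ G, ξ' g j) := by
        rw [Finset.mul_sum Finset.univ, Finset.mul_sum Finset.univ, ← Finset.sum_add_distrib,
          ← Finset.sum_add_distrib]
        refine Finset.sum_le_sum fun j _ => ?_
        have := hv j
        generalize ∑ g ∈ G, ξ g j = a at *
        generalize ∑ g ∈ G, ξ' g j = b at *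
        rw [this]
        nlinarith [sq_nonneg (a - b)]
      unfold dualObj
      linarith
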